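/- Let K be a compact Hausdorff space and X a nontrivial complex Banach space. Let S be a closed subspace of the Banach space C(K,(X,w)) of weakly continuous functions from K to X with the supremum norm, such that the base algebra A := {x* ∘ f : f ∈ S, x* ∈ X*} is a uniform algebra on K and φ·f ∈ S for every φ ∈ A and f ∈ S. If A is infinite-dimensional, then S has the diameter two property: every nonempty relatively weakly open subset of the closed unit ball B_S has diameter two. -/

import Mathlib

open scoped ENNReal

set_option maxHeartbeats 1000000
set_option synthInstance.maxHeartbeats 1000000

/-!
Let `E` be a minimal closed boundary of `A`; it is infinite since `A` is infinite-dimensional.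
Minimality provides functions in `A` peaking in any open set which meets `E`, and averaging many of
them, peaking on successively smaller sets, yields `φ ∈ A` which is small on `E` off a given open
set `U`, satisfies `|1 - φ| ≤ 1 + ε` on `E`, and is close to `1` wherever a further peak function
`g ∈ A` is not small. Choose such pairs `φ n`, `g n` for open sets `U n` disjoint on `E`.
Given `f` in the unit ball of `S`, the functions `φ n • f`, as well as the normalizations `h n` of
`g n • f₀` for a fixed nowhere small `f₀ ∈ S`, are almost disjointly supported on `E`. Hence they
form weakly unconditionally Cauchy series and are weakly null. So `f - φ n • f ± h n` are two
sequences in `S` which converge weakly to `f`, are asymptotically in the unit ball, and stay at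
distance `2` from each other.
-/

open Filter Topology Set Function

section Boundary

variable {K F : Type*} [TopologicalSpace K] [NormedAddCommGroup F]

/-- `E` is a boundary for a set `A` of continuous functions, in the sense of uniform algebras:
every member of `A` attains the maximum of its norm at a point of `E`. -/
def IsBoundary (A : Set C(K, F)) (E : Set K) : Prop :=
  ∀ g ∈ A, ∃ t ∈ E, ∀ s, ‖g s‖ ≤ ‖g t‖

/-- A closed boundary no proper closed subset of which is a boundary; for a uniform algebra this is
the Shilov boundary. -/
def IsMinimalClosedBoundary (A : Set C(K, F)) (E : Set K) : Prop :=
  Minimal (fun B => IsClosed B ∧ IsBoundary A B) E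

lemma isBoundary_univ [CompactSpace K] [Nonempty K] (A : Set C(K, F)) : IsBoundary A univ := by
  intro g _
  obtain ⟨t, -, ht⟩ := isCompact_univ.exists_isMaxOn univ_nonempty g.continuous.norm.continuousOn
  exact ⟨t, mem_univ t, fun s => ht (mem_univ s)⟩

lemma isBoundary_sInter_of_isChain [CompactSpace K] {A : Set C(K, F)} {c : Set (Set K)}
    (hchain : IsChain (· ⊆ ·) c) (hne : c.Nonempty)
    (hc : ∀ B ∈ c, IsClosed B ∧ IsBoundary A B) : IsBoundary A (⋂₀ c) := by
  intro g hg
  have hmax_closed : IsClosed {t | ∀ s, ‖g s‖ ≤ ‖g t‖} := by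
    simp only [ofPred_forall]
    exact isClosed_iInter fun s => isClosed_le continuous_const (by fun_prop)
  have hclosed (B : c) : IsClosed (B.1 ∩ {t | ∀ s, ‖g s‖ ≤ ‖g t‖}) :=
    (hc B B.2).1.inter hmax_closed
  have := hne.to_subtype
  obtain ⟨t, ht⟩ := IsCompact.nonempty_iInter_of_directed_nonempty_isCompact_isClosed
    (fun B : c => B.1 ∩ {t | ∀ s, ‖g s‖ ≤ ‖g t‖})
    (IsChain.directed (f := (· ∩ {t | ∀ s, ‖g s‖ ≤ ‖g t‖}))
      (hchain.symm.mono_rel fun _ _ h => inter_subset_inter_left _ h))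
    (fun B => (hc B B.2).2 g hg) (fun B => (hclosed B).isCompact) hclosed
  rw [mem_iInter] at ht
  exact ⟨t, fun B hB => (ht ⟨B, hB⟩).1, (ht (Classical.arbitrary c)).2⟩

lemma exists_isMinimalClosedBoundary [CompactSpace K] [Nonempty K] (A : Set C(K, F)) :
    ∃ E, IsMinimalClosedBoundary A E := by
  obtain ⟨E, -, hE⟩ := zorn_superset_nonempty {B | IsClosed B ∧ IsBoundary A B}
    (fun c hc hchain hne => ⟨⋂₀ c, ⟨isClosed_sInter fun B hB => (hc hB).1,
      isBoundary_sInter_of_isChain hchain hne hc⟩, fun _ => sInter_subset_of_mem⟩)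
    univ ⟨isClosed_univ, isBoundary_univ A⟩
  exact ⟨E, hE⟩

lemma IsBoundary.infinite_image_eval {𝕜 : Type*} [NontriviallyNormedField 𝕜]
    {A : Submodule 𝕜 C(K, 𝕜)} {E : Set K} (hE : IsBoundary (A : Set C(K, 𝕜)) E)
    (hA : ¬ FiniteDimensional 𝕜 A) : ((fun t (g : A) => g.1 t) '' E).Infinite := by
  intro hfin
  have := hfin.to_subtype
  let restrict : A →ₗ[𝕜] ((fun t (g : A) => g.1 t) '' E → 𝕜) :=
    { toFun g p := p.1 g
      map_add' g h := by ext ⟨_, t, -, rfl⟩; rfl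
      map_smul' c g := by ext ⟨_, t, -, rfl⟩; rfl }
  have hrestrict : Injective restrict := by
    rw [injective_iff_map_eq_zero]
    intro g hg
    obtain ⟨t, ht, hmax⟩ := hE g.1 g.2
    have hgt : g.1 t = 0 := congrFun hg ⟨_, t, ht, rfl⟩
    ext s
    simpa [hgt] using hmax s
  exact hA (.of_injective restrict hrestrict)

end Boundary

lemma exists_seq_isOpen_pairwise_disjoint_inter {K Y : Type*} [TopologicalSpace K]
    [TopologicalSpace Y] [T2Space Y] {f : K → Y} (hf : Continuous f) {E : Set K}
    (hE : (f '' E).Infinite) :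
    ∃ U : ℕ → Set K, (∀ n, IsOpen (U n)) ∧ (∀ n, (U n ∩ E).Nonempty) ∧
      Pairwise (Disjoint on fun n => U n ∩ E) := by
  have := hE.to_subtype
  obtain ⟨V, hVinf, hVo, hVd⟩ := exists_seq_infinite_isOpen_pairwise_disjoint (f '' E)
  choose W hWo hWV using fun n => isOpen_induced_iff.1 (hVo n)
  refine ⟨fun n => f ⁻¹' W n, fun n => (hWo n).preimage hf, fun n => ?_, fun m n hmn => ?_⟩
  · obtain ⟨⟨_, t, ht, rfl⟩, hp⟩ := (hVinf n).nonempty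
    rw [← hWV n] at hp
    exact ⟨t, hp, ht⟩
  · have hd := hVd hmn
    rw [onFun, ← hWV m, ← hWV n] at hd
    refine disjoint_left.2 fun t hm hn => ?_
    have hfm : (⟨f t, mem_image_of_mem f hm.2⟩ : f '' E) ∈ Subtype.val ⁻¹' W m := hm.1
    exact disjoint_left.1 hd hfm hn.1

section Peak

variable {K 𝕜 : Type*} [TopologicalSpace K]

/-- `g` is a contraction which peaks on `E` inside `V`: it takes the value `1` at a point of
`V ∩ E` and is at most `ε` in norm on the rest of `E`. -/
structure IsPeakFunction [NormedField 𝕜] (E V : Set K) (ε : ℝ) (g : C(K, 𝕜)) : Prop where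
  norm_le_one : ∀ t, ‖g t‖ ≤ 1
  exists_eq_one : ∃ t ∈ V ∩ E, g t = 1
  norm_le : ∀ t ∈ E \ V, ‖g t‖ ≤ ε

lemma exists_pow_norm_le_of_isCompact {F : Type*} [SeminormedAddCommGroup F] {C : Set K}
    (hC : IsCompact C) {g : K → F} (hg : Continuous g) (hlt : ∀ t ∈ C, ‖g t‖ < 1) {ε : ℝ}
    (hε : 0 < ε) : ∃ N : ℕ, ∀ t ∈ C, ‖g t‖ ^ N ≤ ε := by
  obtain rfl | hne := C.eq_empty_or_nonempty
  · exact ⟨0, fun t ht => ht.elim⟩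
  obtain ⟨s, hs, hmax⟩ := hC.exists_isMaxOn hne hg.norm.continuousOn
  obtain ⟨N, hN⟩ := exists_pow_lt_of_lt_one hε (hlt s hs)
  exact ⟨N, fun t ht => (pow_le_pow_left₀ (norm_nonneg _) (hmax ht) N).trans hN.le⟩

lemma IsMinimalClosedBoundary.exists_norm_lt_one_of_notMem [NormedField 𝕜]
    {A : Subalgebra 𝕜 C(K, 𝕜)} {E V : Set K}
    (hE : IsMinimalClosedBoundary (A : Set C(K, 𝕜)) E) (hV : IsOpen V) (hVE : (V ∩ E).Nonempty) :
    ∃ g ∈ A, (∀ t, ‖g t‖ ≤ 1) ∧ (∃ t ∈ V ∩ E, g t = 1) ∧ ∀ t ∈ E \ V, ‖g t‖ < 1 := by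
  obtain ⟨p, hpV, hpE⟩ := hVE
  obtain hEV | ⟨s₀, hs₀⟩ := (E \ V).eq_empty_or_nonempty
  · exact ⟨1, A.one_mem, by simp, ⟨p, ⟨hpV, hpE⟩, rfl⟩, by simp [hEV]⟩
  have hnot : ¬ IsBoundary (A : Set C(K, 𝕜)) (E \ V) := fun h =>
    (hE.le_of_le ⟨hE.prop.1.sdiff hV, h⟩ sdiff_subset hpE).2 hpV
  simp only [IsBoundary] at hnot
  push Not at hnot
  obtain ⟨g, hg, hlt⟩ := hnot
  obtain ⟨t₀, ht₀E, hmax⟩ := hE.prop.2 g hg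
  replace hlt : ∀ t ∈ E \ V, ‖g t‖ < ‖g t₀‖ := fun t ht =>
    (hlt t ht).elim fun s hs => hs.trans_le (hmax s)
  have hpos : 0 < ‖g t₀‖ := (norm_nonneg _).trans_lt (hlt s₀ hs₀)
  have hnorm (t : K) : ‖((g t₀)⁻¹ • g) t‖ = ‖g t‖ / ‖g t₀‖ := by
    simp [div_eq_inv_mul]
  refine ⟨(g t₀)⁻¹ • g, A.smul_mem hg _, fun t => ?_, ⟨t₀, ⟨?_, ht₀E⟩, ?_⟩, fun t ht => ?_⟩
  · rw [hnorm, div_le_one hpos]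
    exact hmax t
  · by_contra ht₀V
    exact (hlt t₀ ⟨ht₀E, ht₀V⟩).false
  · simp [norm_pos_iff.1 hpos]
  · rw [hnorm, div_lt_one hpos]
    exact hlt t ht

lemma IsMinimalClosedBoundary.exists_isPeakFunction [NormedField 𝕜] [CompactSpace K]
    {A : Subalgebra 𝕜 C(K, 𝕜)} {E V : Set K}
    (hE : IsMinimalClosedBoundary (A : Set C(K, 𝕜)) E) (hV : IsOpen V) (hVE : (V ∩ E).Nonempty)
    {ε : ℝ} (hε : 0 < ε) : ∃ g ∈ A, IsPeakFunction E V ε g := by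
  obtain ⟨g, hg, hg1, ⟨t₀, ht₀, hgt₀⟩, hlt⟩ := hE.exists_norm_lt_one_of_notMem hV hVE
  obtain ⟨N, hN⟩ :=
    exists_pow_norm_le_of_isCompact (hE.prop.1.sdiff hV).isCompact g.continuous hlt hε
  refine ⟨g ^ N, A.pow_mem hg N, fun t => ?_, ⟨t₀, ht₀, by simp [hgt₀]⟩, fun t ht => ?_⟩
  · simpa using pow_le_one₀ (norm_nonneg _) (hg1 t)
  · simpa using hN t ht

end Peak

section Urysohn

variable {K 𝕜 : Type*} [TopologicalSpace K] [RCLike 𝕜] {E V V' : Set K}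

/-- The estimates on `E` satisfied by a sum `Φ` of `k` functions peaking on successively smaller
sets between `V` and `V'`, each up to an error `δ`. Where one function is in transition, those
before it are close to `1` and those after it close to `0`; this is the reason why the bound in
`norm_natCast_sub_le` is `k + 1` rather than `2 * k`. -/
structure IsPeakSum (E V V' : Set K) (δ : ℝ) (k : ℕ) (Φ : C(K, 𝕜)) : Prop where
  norm_le_natCast : ∀ t, ‖Φ t‖ ≤ k
  norm_natCast_sub_le : ∀ t ∈ E, ‖(k : 𝕜) - Φ t‖ ≤ k + 1 + k * δ
  norm_le : ∀ t ∈ E \ V, ‖Φ t‖ ≤ k * δ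
  norm_natCast_sub_le_of_mem : ∀ t ∈ V', ‖(k : 𝕜) - Φ t‖ ≤ k * δ

lemma isPeakSum_zero (δ : ℝ) : IsPeakSum E V V δ 0 (0 : C(K, 𝕜)) where
  norm_le_natCast := by simp
  norm_natCast_sub_le := by simp
  norm_le := by simp
  norm_natCast_sub_le_of_mem := by simp

lemma IsPeakSum.add_isPeakFunction {δ : ℝ} {k : ℕ} {Φ g : C(K, 𝕜)}
    (hΦ : IsPeakSum E V V' δ k Φ) (hg : IsPeakFunction E V' δ g) (hδ : 0 ≤ δ) (hV' : V' ⊆ V) :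
    IsPeakSum E V (V' ∩ {t | ‖1 - g t‖ < δ}) δ (k + 1) (Φ + g) := by
  have hadd (t : K) : ‖(Φ + g) t‖ ≤ ‖Φ t‖ + ‖g t‖ := norm_add_le _ _
  have hsub (t : K) : ‖((k + 1 : ℕ) : 𝕜) - (Φ + g) t‖ ≤ ‖(k : 𝕜) - Φ t‖ + ‖1 - g t‖ := by
    have hsplit : ((k + 1 : ℕ) : 𝕜) - (Φ + g) t = ((k : 𝕜) - Φ t) + (1 - g t) := by
      simp only [Nat.cast_add, Nat.cast_one, ContinuousMap.add_apply]
      ring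
    exact hsplit ▸ norm_add_le _ _
  have hg' (t : K) : ‖1 - g t‖ ≤ 1 + ‖g t‖ := by simpa using norm_sub_le (1 : 𝕜) (g t)
  constructor <;> simp only [Nat.cast_add, Nat.cast_one] at hsub ⊢
  · exact fun t => (hadd t).trans (add_le_add (hΦ.norm_le_natCast t) (hg.norm_le_one t))
  · intro t ht
    by_cases htV' : t ∈ V'
    · linarith [hsub t, hg' t, hΦ.norm_natCast_sub_le_of_mem t htV', hg.norm_le_one t]
    · linarith [hsub t, hg' t, hΦ.norm_natCast_sub_le t ht, hg.norm_le t ⟨ht, htV'⟩]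
  · intro t ht
    linarith [hadd t, hΦ.norm_le t ht, hg.norm_le t ⟨ht.1, fun h => ht.2 (hV' h)⟩]
  · rintro t ⟨htV', hlt : ‖1 - g t‖ < δ⟩
    linarith [hsub t, hΦ.norm_natCast_sub_le_of_mem t htV']

lemma IsMinimalClosedBoundary.exists_isPeakSum [CompactSpace K] {A : Subalgebra 𝕜 C(K, 𝕜)}
    (hE : IsMinimalClosedBoundary (A : Set C(K, 𝕜)) E) (hV : IsOpen V) (hVE : (V ∩ E).Nonempty)
    {δ : ℝ} (hδ : 0 < δ) (k : ℕ) :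
    ∃ Φ ∈ A, ∃ V' ⊆ V, IsOpen V' ∧ (V' ∩ E).Nonempty ∧ IsPeakSum E V V' δ k Φ := by
  induction k with
  | zero => exact ⟨0, A.zero_mem, V, subset_rfl, hV, hVE, isPeakSum_zero δ⟩
  | succ k ih =>
    obtain ⟨Φ, hΦA, V', hV'V, hV', hV'E, hΦ⟩ := ih
    obtain ⟨g, hgA, hg⟩ := hE.exists_isPeakFunction hV' hV'E hδ
    obtain ⟨t, ⟨htV', htE⟩, hgt⟩ := hg.exists_eq_one
    exact ⟨Φ + g, A.add_mem hΦA hgA, V' ∩ {t | ‖1 - g t‖ < δ}, inter_subset_left.trans hV'V,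
      hV'.inter (isOpen_lt (by fun_prop) continuous_const), ⟨t, ⟨htV', by simpa [hgt]⟩, htE⟩,
      hΦ.add_isPeakFunction hg hδ.le hV'V⟩

/-- `φ` behaves on `E` like a Urysohn function which is `0` off `V` and `1` on `V'`, up to `ε`;
the bound on `‖1 - φ t‖` replaces the condition `0 ≤ φ t ≤ 1`. -/
structure IsAlmostUrysohn (E V V' : Set K) (ε : ℝ) (φ : C(K, 𝕜)) : Prop where
  norm_le_one : ∀ t, ‖φ t‖ ≤ 1
  norm_one_sub_le : ∀ t ∈ E, ‖1 - φ t‖ ≤ 1 + ε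
  norm_le : ∀ t ∈ E \ V, ‖φ t‖ ≤ ε
  norm_one_sub_le_of_mem : ∀ t ∈ V', ‖1 - φ t‖ ≤ ε

lemma IsPeakSum.isAlmostUrysohn {ε : ℝ} {k : ℕ} {Φ : C(K, 𝕜)} (hkε : 2 ≤ k * ε)
    (hΦ : IsPeakSum E V V' (ε / 2) k Φ) : IsAlmostUrysohn E V V' ε ((k : 𝕜)⁻¹ • Φ) := by
  have hk : k ≠ 0 := by
    rintro rfl
    norm_num at hkε
  have hk' : (0 : ℝ) < k := Nat.cast_pos.2 (Nat.pos_of_ne_zero hk)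
  have hnorm (t : K) : ‖((k : 𝕜)⁻¹ • Φ) t‖ = ‖Φ t‖ / k := by
    simp [div_eq_inv_mul]
  have hnorm_sub (t : K) : ‖1 - ((k : 𝕜)⁻¹ • Φ) t‖ = ‖(k : 𝕜) - Φ t‖ / k := by
    have hsplit : 1 - ((k : 𝕜)⁻¹ • Φ) t = (k : 𝕜)⁻¹ * ((k : 𝕜) - Φ t) := by
      rw [mul_sub, inv_mul_cancel₀ (Nat.cast_ne_zero.2 hk), ContinuousMap.smul_apply,
        smul_eq_mul]
    rw [hsplit, norm_mul, norm_inv, RCLike.norm_natCast, div_eq_inv_mul]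
  constructor <;> intro t
  · rw [hnorm, div_le_one hk']
    exact hΦ.norm_le_natCast t
  · intro ht
    rw [hnorm_sub, div_le_iff₀ hk']
    linarith [hΦ.norm_natCast_sub_le t ht]
  · intro ht
    rw [hnorm, div_le_iff₀ hk']
    linarith [hΦ.norm_le t ht]
  · intro ht
    rw [hnorm_sub, div_le_iff₀ hk']
    linarith [hΦ.norm_natCast_sub_le_of_mem t ht]

lemma IsMinimalClosedBoundary.exists_isAlmostUrysohn_isPeakFunction [CompactSpace K]
    {A : Subalgebra 𝕜 C(K, 𝕜)} (hE : IsMinimalClosedBoundary (A : Set C(K, 𝕜)) E)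
    (hV : IsOpen V) (hVE : (V ∩ E).Nonempty) {ε : ℝ} (hε : 0 < ε) :
    ∃ V' ⊆ V, ∃ φ ∈ A, ∃ g ∈ A, IsAlmostUrysohn E V V' ε φ ∧ IsPeakFunction E V' ε g := by
  obtain ⟨k, hk⟩ := exists_nat_gt (2 / ε)
  obtain ⟨Φ, hΦA, V', hV'V, hV', hV'E, hΦ⟩ := hE.exists_isPeakSum hV hVE (half_pos hε) k
  obtain ⟨g, hgA, hg⟩ := hE.exists_isPeakFunction hV' hV'E hε
  exact ⟨V', hV'V, (k : 𝕜)⁻¹ • Φ, A.smul_mem hΦA _, g, hgA,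
    hΦ.isAlmostUrysohn ((div_lt_iff₀ hε).1 hk).le, hg⟩

end Urysohn

section WeakTopology

variable {𝕜 Y ι : Type*} [RCLike 𝕜] [NormedAddCommGroup Y] [NormedSpace 𝕜 Y]

lemma tendsto_toWeakSpace_iff {R V : Type*} [CommSemiring R] [TopologicalSpace R]
    [ContinuousAdd R] [ContinuousConstSMul R R] [AddCommMonoid V] [Module R V] [TopologicalSpace V]
    {l : Filter ι} {u : ι → V} {v : V} :
    Tendsto (fun i => toWeakSpace R V (u i)) l (𝓝 (toWeakSpace R V v)) ↔
      ∀ x : StrongDual R V, Tendsto (fun i => x (u i)) l (𝓝 (x v)) := by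
  have hind : IsInducing fun (w : WeakSpace R V) (x : StrongDual R V) =>
      (topDualPairing R V).flip w x := ⟨rfl⟩
  rw [hind.tendsto_nhds_iff, tendsto_pi_nhds]
  rfl

/-- `∑ u i` is weakly unconditionally Cauchy, whence `u` is weakly null. -/
lemma tendsto_toWeakSpace_zero_of_norm_sum_smul_le {u : ι → Y} {C : ℝ}
    (h : ∀ (s : Finset ι) (c : ι → 𝕜), (∀ i, ‖c i‖ = 1) → ‖∑ i ∈ s, c i • u i‖ ≤ C) :
    Tendsto (fun i => toWeakSpace 𝕜 Y (u i)) cofinite (𝓝 0) := by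
  rw [← map_zero (toWeakSpace 𝕜 Y), tendsto_toWeakSpace_iff]
  intro x
  choose c hc hxc using fun i => RCLike.exists_norm_eq_mul_self (x (u i))
  rw [map_zero, tendsto_zero_iff_norm_tendsto_zero]
  refine (summable_of_sum_le (c := ‖x‖ * C) (fun _ => norm_nonneg _)
    fun s => ?_).tendsto_cofinite_zero
  have hsum : ((∑ i ∈ s, ‖x (u i)‖ : ℝ) : 𝕜) = x (∑ i ∈ s, c i • u i) := by
    simp only [map_sum, hxc, map_smul, smul_eq_mul]
  calc ∑ i ∈ s, ‖x (u i)‖ = ‖x (∑ i ∈ s, c i • u i)‖ := by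
        rw [← hsum, RCLike.norm_of_nonneg (Finset.sum_nonneg fun _ _ => norm_nonneg _)]
    _ ≤ ‖x‖ * C := x.le_opNorm_of_le (h s c hc)

lemma eventually_inv_smul_mem_preimage_toWeakSpace_inter_closedBall {W : Set (WeakSpace 𝕜 Y)}
    (hW : IsOpen W) {y : Y} (hy : toWeakSpace 𝕜 Y y ∈ W) {l : Filter ι} {v : ι → Y} {η : ι → ℝ}
    (hη₀ : ∀ i, 0 ≤ η i) (hη : Tendsto η l (𝓝 0))
    (hv : Tendsto (fun i => toWeakSpace 𝕜 Y (v i)) l (𝓝 (toWeakSpace 𝕜 Y y)))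
    (hle : ∀ i, ‖v i‖ ≤ 1 + η i) :
    ∀ᶠ i in l, (((1 + η i)⁻¹ : ℝ) : 𝕜) • v i ∈
      toWeakSpace 𝕜 Y ⁻¹' W ∩ Metric.closedBall 0 1 := by
  have hr : Tendsto (fun i => (((1 + η i)⁻¹ : ℝ) : 𝕜)) l (𝓝 1) := by
    have := (RCLike.continuous_ofReal (K := 𝕜)).continuousAt.tendsto.comp
      ((hη.const_add 1).inv₀ (by norm_num))
    simpa [comp_def] using this
  have hlim := hr.smul hv
  rw [one_smul] at hlim
  filter_upwards [hlim.eventually (hW.mem_nhds hy)] with i hi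
  refine ⟨by rwa [mem_preimage, map_smul], ?_⟩
  have hpos : 0 < 1 + η i := by linarith [hη₀ i]
  rw [mem_closedBall_zero_iff, norm_smul, RCLike.norm_of_nonneg (inv_nonneg.2 hpos.le),
    inv_mul_le_one₀ hpos]
  exact hle i

lemma diam_preimage_toWeakSpace_inter_closedBall {W : Set (WeakSpace 𝕜 Y)} (hW : IsOpen W) {y : Y}
    (hy : toWeakSpace 𝕜 Y y ∈ W) {l : Filter ι} [l.NeBot] {p h : ι → Y} {η : ι → ℝ}
    (hp : Tendsto (fun i => toWeakSpace 𝕜 Y (p i)) l (𝓝 (toWeakSpace 𝕜 Y y)))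
    (hh : Tendsto (fun i => toWeakSpace 𝕜 Y (h i)) l (𝓝 0)) (h_norm : ∀ i, ‖h i‖ = 1)
    (hη : Tendsto η l (𝓝 0)) (h_add : ∀ i, ‖p i + h i‖ ≤ 1 + η i)
    (h_sub : ∀ i, ‖p i - h i‖ ≤ 1 + η i) :
    Metric.diam (toWeakSpace 𝕜 Y ⁻¹' W ∩ Metric.closedBall 0 1) = 2 := by
  have hdiff (i : ι) : (p i + h i) - (p i - h i) = (2 : 𝕜) • h i := by module
  have hη₀ (i : ι) : 0 ≤ η i := by
    have htriangle := norm_sub_le (p i + h i) (p i - h i)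
    rw [hdiff, norm_smul, h_norm, RCLike.norm_two] at htriangle
    linarith [h_add i, h_sub i]
  have hmem_add := eventually_inv_smul_mem_preimage_toWeakSpace_inter_closedBall hW hy hη₀ hη
    (by simpa using hp.add hh) h_add
  have hmem_sub := eventually_inv_smul_mem_preimage_toWeakSpace_inter_closedBall hW hy hη₀ hη
    (by simpa using hp.sub hh) h_sub
  apply le_antisymm
  · calc Metric.diam (toWeakSpace 𝕜 Y ⁻¹' W ∩ Metric.closedBall 0 1)
        ≤ Metric.diam (Metric.closedBall (0 : Y) 1) :=
          Metric.diam_mono inter_subset_right Metric.isBounded_closedBall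
      _ ≤ 2 * 1 := Metric.diam_closedBall zero_le_one
      _ = 2 := mul_one 2
  · have hlim : Tendsto (fun i => (1 + η i)⁻¹ * 2) l (𝓝 2) := by
      simpa using ((hη.const_add 1).inv₀ (by norm_num)).mul_const 2
    refine le_of_tendsto hlim ?_
    filter_upwards [hmem_add, hmem_sub] with i hi_add hi_sub
    refine le_of_eq_of_le ?_ (Metric.dist_le_diam_of_mem
      (Metric.isBounded_closedBall.subset inter_subset_right) hi_add hi_sub)
    rw [dist_eq_norm, ← smul_sub, hdiff, norm_smul, norm_smul, h_norm, RCLike.norm_two, mul_one,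
      RCLike.norm_of_nonneg (inv_nonneg.2 (by linarith [hη₀ i]))]

end WeakTopology

section AlmostDisjoint

lemma exists_seq_isAlmostUrysohn_isPeakFunction {K 𝕜 : Type*} [TopologicalSpace K] [CompactSpace K]
    [RCLike 𝕜] {A : Subalgebra 𝕜 C(K, 𝕜)} {E : Set K}
    (hE : IsMinimalClosedBoundary (A : Set C(K, 𝕜)) E) (hA : ¬ FiniteDimensional 𝕜 A) {ε : ℕ → ℝ}
    (hε : ∀ n, 0 < ε n) :
    ∃ U V : ℕ → Set K, ∃ φ g : ℕ → C(K, 𝕜), Pairwise (Disjoint on fun n => U n ∩ E) ∧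
      (∀ n, V n ⊆ U n) ∧ (∀ n, φ n ∈ A) ∧ (∀ n, g n ∈ A) ∧
      (∀ n, IsAlmostUrysohn E (U n) (V n) (ε n) (φ n)) ∧
      ∀ n, IsPeakFunction E (V n) (ε n) (g n) := by
  obtain ⟨U, hU, hUE, hUd⟩ := exists_seq_isOpen_pairwise_disjoint_inter
    (f := fun t (g : Subalgebra.toSubmodule A) => g.1 t) (by fun_prop)
    (hE.prop.2.infinite_image_eval (A := Subalgebra.toSubmodule A) hA)
  choose V hVU φ hφA g hgA hφ hg using fun n =>
    hE.exists_isAlmostUrysohn_isPeakFunction (hU n) (hUE n) (hε n)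
  exact ⟨U, V, φ, g, hUd, hVU, hφA, hgA, hφ, hg⟩

lemma sum_le_add_sum_of_subsingleton {ι : Type*} {a ε : ι → ℝ} {C : ℝ} {P : Set ι}
    (hP : P.Subsingleton) (hC : 0 ≤ C) (hε : ∀ i, 0 ≤ ε i) (haC : ∀ i ∈ P, a i ≤ C)
    (haε : ∀ i ∉ P, a i ≤ ε i) (s : Finset ι) : ∑ i ∈ s, a i ≤ C + ∑ i ∈ s, ε i := by
  classical
  have hcard : (s.filter (· ∈ P)).card ≤ 1 := Finset.card_le_one.2 fun i hi j hj =>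
    hP (Finset.mem_filter.1 hi).2 (Finset.mem_filter.1 hj).2
  rw [← Finset.sum_filter_add_sum_filter_not s (· ∈ P)]
  gcongr ?_ + ?_
  · calc ∑ i ∈ s with i ∈ P, a i ≤ (s.filter (· ∈ P)).card • C :=
          Finset.sum_le_card_nsmul _ _ _ fun i hi => haC i (Finset.mem_filter.1 hi).2
      _ ≤ 1 • C := nsmul_le_nsmul_left hC hcard
      _ = C := one_nsmul C
  · exact (Finset.sum_le_sum fun i hi => haε i (Finset.mem_filter.1 hi).2).trans
      (Finset.sum_le_sum_of_subset_of_nonneg (Finset.filter_subset _ s) fun i _ _ => hε i)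

variable {K X 𝕜 : Type*} [RCLike 𝕜] [NormedAddCommGroup X] [NormedSpace 𝕜 X]
  {S : Submodule 𝕜 (lp (fun _ : K => X) ∞)} {E : Set K}

/-- The norm on `S` is the supremum over `E`; the condition `0 ≤ C` makes the supremum over the
empty set equal to `0`. -/
def IsNormingSet (S : Submodule 𝕜 (lp (fun _ : K => X) ∞)) (E : Set K) : Prop :=
  ∀ (f : S) ⦃C : ℝ⦄, 0 ≤ C → (∀ t ∈ E, ‖f.1 t‖ ≤ C) → ‖f‖ ≤ C

lemma norm_coe_apply_le_norm (f : S) (t : K) : ‖f.1 t‖ ≤ ‖f‖ :=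
  lp.norm_apply_le_norm ENNReal.top_ne_zero f.1 t

lemma IsNormingSet.tendsto_toWeakSpace_zero {ι : Type*} (hE : IsNormingSet S E) {U : ι → Set K}
    (hU : Pairwise (Disjoint on fun i => U i ∩ E)) {u : ι → S} {C : ℝ} (hC : 0 ≤ C) {ε : ι → ℝ}
    (hε₀ : ∀ i, 0 ≤ ε i) (hε : Summable ε) (huC : ∀ i, ‖u i‖ ≤ C)
    (huε : ∀ i, ∀ t ∈ E \ U i, ‖(u i).1 t‖ ≤ ε i) :
    Tendsto (fun i => toWeakSpace 𝕜 S (u i)) cofinite (𝓝 0) := by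
  refine tendsto_toWeakSpace_zero_of_norm_sum_smul_le (C := C + ∑' i, ε i) fun s c hc =>
    hE _ (add_nonneg hC (tsum_nonneg hε₀)) fun t ht => ?_
  have hsub : {i | t ∈ U i}.Subsingleton := fun i hi j hj =>
    hU.eq (not_disjoint_iff.2 ⟨t, ⟨hi, ht⟩, ⟨hj, ht⟩⟩)
  calc ‖(∑ i ∈ s, c i • u i).1 t‖ = ‖∑ i ∈ s, c i • (u i).1 t‖ := by
        rw [S.coe_sum, lp.coeFn_sum, Finset.sum_apply]
        rfl
    _ ≤ ∑ i ∈ s, ‖(u i).1 t‖ := (norm_sum_le _ _).trans_eq (by simp only [norm_smul, hc, one_mul])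
    _ ≤ C + ∑ i ∈ s, ε i := sum_le_add_sum_of_subsingleton hsub hC hε₀
        (fun i _ => (norm_coe_apply_le_norm _ t).trans (huC i))
        (fun i hi => huε i t ⟨ht, hi⟩) s
    _ ≤ C + ∑' i, ε i := by gcongr; exact hε.sum_le_tsum s fun i _ => hε₀ i

lemma exists_norm_eq_one_norm_apply_le {f₀ h : S} {c : ℝ} (hc : 0 < c) (hf₀ : ∀ t, c ≤ ‖f₀.1 t‖)
    {g : K → 𝕜} (hh : ∀ t, h.1 t = g t • f₀.1 t) {t₀ : K} (hg : g t₀ = 1) :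
    ∃ v : S, ‖v‖ = 1 ∧ ∀ t, ‖v.1 t‖ ≤ ‖f₀‖ / c * ‖g t‖ := by
  have hch : c ≤ ‖h‖ := by
    calc c ≤ ‖f₀.1 t₀‖ := hf₀ t₀
      _ = ‖h.1 t₀‖ := by rw [hh, hg, one_smul]
      _ ≤ ‖h‖ := norm_coe_apply_le_norm h t₀
  have hpos : 0 < ‖h‖ := hc.trans_le hch
  refine ⟨((‖h‖⁻¹ : ℝ) : 𝕜) • h, ?_, fun t => ?_⟩
  · rw [norm_smul, RCLike.norm_of_nonneg (inv_nonneg.2 hpos.le), inv_mul_cancel₀ hpos.ne']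
  calc ‖(((‖h‖⁻¹ : ℝ) : 𝕜) • h).1 t‖ = ‖h‖⁻¹ * (‖g t‖ * ‖f₀.1 t‖) := by
        change ‖((‖h‖⁻¹ : ℝ) : 𝕜) • h.1 t‖ = _
        rw [hh, norm_smul, norm_smul, RCLike.norm_of_nonneg (inv_nonneg.2 hpos.le)]
    _ ≤ c⁻¹ * (‖g t‖ * ‖f₀‖) := by gcongr; exact norm_coe_apply_le_norm f₀ t
    _ = ‖f₀‖ / c * ‖g t‖ := by ring

lemma IsNormingSet.norm_sub_add_le [TopologicalSpace K] (hE : IsNormingSet S E) {U V : Set K}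
    {ε M : ℝ} {φ g : C(K, 𝕜)} (hφ : IsAlmostUrysohn E U V ε φ) (hg : IsPeakFunction E V ε g)
    (hε : 0 ≤ ε) (hM : 0 ≤ M) {f q v : S} (hf : ‖f‖ ≤ 1) (hq : ∀ t, q.1 t = φ t • f.1 t)
    (hv : ‖v‖ ≤ 1) (hvg : ∀ t, ‖v.1 t‖ ≤ M * ‖g t‖) : ‖f - q + v‖ ≤ 1 + (1 + M) * ε := by
  refine hE _ (by positivity) fun t ht => ?_
  have hft : ‖f.1 t‖ ≤ 1 := (norm_coe_apply_le_norm f t).trans hf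
  have hsub : (f - q).1 t = (1 - φ t) • f.1 t := by
    rw [sub_smul, one_smul, ← hq]
    rfl
  have hfq : ‖(f - q).1 t‖ ≤ ‖1 - φ t‖ := by
    rw [hsub, norm_smul]
    exact mul_le_of_le_one_right (norm_nonneg _) hft
  have hadd : ‖(f - q + v).1 t‖ ≤ ‖1 - φ t‖ + ‖v.1 t‖ :=
    (norm_add_le ((f - q).1 t) (v.1 t)).trans (by gcongr)
  have hMε : 0 ≤ M * ε := mul_nonneg hM hε
  by_cases htV : t ∈ V
  · linarith [hφ.norm_one_sub_le_of_mem t htV, (norm_coe_apply_le_norm v t).trans hv]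
  · linarith [hφ.norm_one_sub_le t ht,
      (hvg t).trans (mul_le_mul_of_nonneg_left (hg.norm_le t ⟨ht, htV⟩) hM)]

end AlmostDisjoint

section BaseAlgebra

variable {K X 𝕜 : Type*} [TopologicalSpace K] [RCLike 𝕜] [NormedAddCommGroup X]
  [NormedSpace 𝕜 X] {S : Submodule 𝕜 (lp (fun _ : K => X) ∞)}

lemma IsBoundary.isNormingSet {A : Set C(K, 𝕜)} {E : Set K} (hE : IsBoundary A E)
    (hSweak : ∀ f ∈ S, Continuous fun t => toWeakSpace 𝕜 X (f t))
    (hA : {g : C(K, 𝕜) | ∃ f ∈ S, ∃ x : X →L[𝕜] 𝕜, ∀ t, g t = x (f t)} ⊆ A) :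
    IsNormingSet S E := by
  refine fun f C hC hfC => lp.norm_le_of_forall_le hC fun t => ?_
  obtain ⟨x, hx, hxt⟩ := exists_dual_vector'' 𝕜 (f.1 t)
  have hcont : Continuous fun s => x (f.1 s) :=
    (WeakBilin.eval_continuous (topDualPairing 𝕜 X).flip x).comp (hSweak f.1 f.2)
  obtain ⟨s, hs, hmax⟩ := hE ⟨_, hcont⟩ (hA ⟨f.1, f.2, x, fun _ => rfl⟩)
  calc ‖f.1 t‖ = ‖x (f.1 t)‖ := by simp [hxt]
    _ ≤ ‖x (f.1 s)‖ := hmax t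
    _ ≤ 1 * ‖f.1 s‖ := x.le_of_opNorm_le hx _
    _ ≤ C := (one_mul _).trans_le (hfC s hs)

lemma exists_forall_mem_exists_norm_eq_one_norm_apply_le {A : Set C(K, 𝕜)}
    (hone : ∃ f ∈ S, ∃ x : X →L[𝕜] 𝕜, ∀ t, x (f t) = 1)
    (hmul : ∀ g ∈ A, ∀ f ∈ S, ∃ h ∈ S, ∀ t, h t = g t • f t) :
    ∃ M, 0 ≤ M ∧ ∀ g ∈ A, ∀ t₀, g t₀ = 1 →
      ∃ v : S, ‖v‖ = 1 ∧ ∀ t, ‖v.1 t‖ ≤ M * ‖g t‖ := by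
  obtain ⟨f, hfS, x, hx⟩ := hone
  have hf (t : K) : (‖x‖ + 1)⁻¹ ≤ ‖f t‖ := by
    rw [inv_le_iff_one_le_mul₀' (by positivity)]
    calc 1 = ‖x (f t)‖ := by rw [hx, norm_one]
      _ ≤ ‖x‖ * ‖f t‖ := x.le_opNorm _
      _ ≤ (‖x‖ + 1) * ‖f t‖ := by gcongr; exact le_add_of_nonneg_right zero_le_one
  refine ⟨‖f‖ / (‖x‖ + 1)⁻¹, by positivity, fun g hg t₀ hgt₀ => ?_⟩
  obtain ⟨h, hhS, hh⟩ := hmul g hg f hfS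
  exact exists_norm_eq_one_norm_apply_le (f₀ := ⟨f, hfS⟩) (h := ⟨h, hhS⟩) (by positivity) hf hh
    hgt₀

lemma IsNormingSet.exists_seq_norm_sub_add_le [CompactSpace K] {A : Subalgebra 𝕜 C(K, 𝕜)}
    {E : Set K} (hES : IsNormingSet S E) (hE : IsMinimalClosedBoundary (A : Set C(K, 𝕜)) E)
    (hAinf : ¬ FiniteDimensional 𝕜 A) (hone : ∃ f ∈ S, ∃ x : X →L[𝕜] 𝕜, ∀ t, x (f t) = 1)
    (hmul : ∀ g ∈ A, ∀ f ∈ S, ∃ h ∈ S, ∀ t, h t = g t • f t) {f : S} (hf : ‖f‖ ≤ 1) :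
    ∃ (q h : ℕ → S) (η : ℕ → ℝ),
      Tendsto (fun n => toWeakSpace 𝕜 S (q n)) cofinite (𝓝 0) ∧
      Tendsto (fun n => toWeakSpace 𝕜 S (h n)) cofinite (𝓝 0) ∧ (∀ n, ‖h n‖ = 1) ∧
      Tendsto η cofinite (𝓝 0) ∧ (∀ n, ‖f - q n + h n‖ ≤ 1 + η n) ∧
      ∀ n, ‖f - q n - h n‖ ≤ 1 + η n := by
  let ε (n : ℕ) : ℝ := (1 / 2) ^ n
  have hε (n : ℕ) : 0 < ε n := by positivity
  have hεsum : Summable ε := summable_geometric_two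
  obtain ⟨U, V, φ, g, hUd, hVU, hφA, hgA, hφ, hg⟩ :=
    exists_seq_isAlmostUrysohn_isPeakFunction hE hAinf hε
  obtain ⟨M, hM, hMA⟩ := exists_forall_mem_exists_norm_eq_one_norm_apply_le hone hmul
  choose t _ hgt using fun n => (hg n).exists_eq_one
  choose h h_norm hhg using fun n => hMA (g n) (hgA n) (t n) (hgt n)
  choose q hqS hqf using fun n => hmul (φ n) (hφA n) f f.2
  have hqφ (n : ℕ) (s : K) : ‖q n s‖ ≤ ‖φ n s‖ := by
    rw [hqf, norm_smul]
    exact mul_le_of_le_one_right (norm_nonneg _) ((norm_coe_apply_le_norm f s).trans hf)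
  have hest (n : ℕ) {v : S} := hES.norm_sub_add_le (q := ⟨q n, hqS n⟩) (v := v) (hφ n) (hg n)
    (hε n).le hM hf (hqf n)
  refine ⟨fun n => ⟨q n, hqS n⟩, h, fun n => (1 + M) * ε n, ?_, ?_, h_norm, ?_,
    fun n => hest n (h_norm n).le (hhg n), fun n => ?_⟩
  · exact hES.tendsto_toWeakSpace_zero hUd zero_le_one (fun n => (hε n).le) hεsum
      (fun n => lp.norm_le_of_forall_le zero_le_one fun s =>
        (hqφ n s).trans ((hφ n).norm_le_one s))
      (fun n s hs => (hqφ n s).trans ((hφ n).norm_le s hs))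
  · exact hES.tendsto_toWeakSpace_zero hUd zero_le_one (fun n => mul_nonneg hM (hε n).le)
      (hεsum.mul_left M) (fun n => (h_norm n).le) (fun n s hs => (hhg n s).trans
        (mul_le_mul_of_nonneg_left ((hg n).norm_le s ⟨hs.1, fun h => hs.2 (hVU n h)⟩) hM))
  · simpa using hεsum.tendsto_cofinite_zero.const_mul (1 + M)
  · rw [sub_eq_add_neg]
    exact hest n ((norm_neg _).trans_le (h_norm n).le) fun s => (norm_neg _).trans_le (hhg n s)

end BaseAlgebra

theorem stmt_8_general {K X 𝕜 : Type*} [TopologicalSpace K] [CompactSpace K] [RCLike 𝕜]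
    [NormedAddCommGroup X] [NormedSpace 𝕜 X] (S : Submodule 𝕜 (lp (fun _ : K => X) ∞))
    (hSweak : ∀ f ∈ S, Continuous (fun t : K => toWeakSpace 𝕜 X (f t)))
    (A : Subalgebra 𝕜 C(K, 𝕜))
    (hAbase : (A : Set C(K, 𝕜)) =
      {g : C(K, 𝕜) | ∃ f ∈ S, ∃ φ : X →L[𝕜] 𝕜, ∀ t : K, g t = φ (f t)})
    (hmul : ∀ φ ∈ A, ∀ f ∈ S, ∃ h ∈ S, ∀ t : K, h t = φ t • f t)
    (hAinf : ¬ FiniteDimensional 𝕜 A) (W : Set (WeakSpace 𝕜 S)) (hW : IsOpen W)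
    (hne : ((⇑(toWeakSpace 𝕜 S) ⁻¹' W) ∩ Metric.closedBall (0 : S) 1).Nonempty) :
    Metric.diam ((⇑(toWeakSpace 𝕜 S) ⁻¹' W) ∩ Metric.closedBall (0 : S) 1) = 2 := by
  obtain ⟨f, hfW, hf⟩ := hne
  have : Nonempty K := by
    by_contra! hK
    exact hAinf inferInstance
  obtain ⟨E, hE⟩ := exists_isMinimalClosedBoundary (A : Set C(K, 𝕜))
  have hES : IsNormingSet S E := hE.prop.2.isNormingSet hSweak hAbase.ge
  have hone : ∃ f ∈ S, ∃ x : X →L[𝕜] 𝕜, ∀ t, x (f t) = 1 := by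
    obtain ⟨f₀, hf₀, x, hx⟩ := hAbase.le A.one_mem
    exact ⟨f₀, hf₀, x, fun t => (hx t).symm⟩
  obtain ⟨q, h, η, hq, hh, h_norm, hη, h_add, h_sub⟩ :=
    hES.exists_seq_norm_sub_add_le hE hAinf hone hmul (mem_closedBall_zero_iff.1 hf)
  have hfq : Tendsto (fun n => toWeakSpace 𝕜 S (f - q n)) cofinite (𝓝 (toWeakSpace 𝕜 S f)) := by
    simpa using tendsto_const_nhds.sub hq
  exact diam_preimage_toWeakSpace_inter_closedBall hW hfW hfq hh h_norm hη h_add h_sub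

/- STATEMENT 8: Let `S` be a closed subspace of the Banach space `C(K,(X,w))` of
weakly continuous functions from the compact Hausdorff space `K` into the complex
Banach space `X` with the supremum norm (realized here as a closed subspace of the
sup-normed space of bounded functions `K → X` all of whose members are weakly
continuous), such that the base algebra `A = {x* ∘ f : f ∈ S, x* ∈ X*}` is a uniform
algebra on `K` and `φ·f ∈ S` for all `φ ∈ A`, `f ∈ S`. If `A` is infinite-dimensional,
then `S` has the diameter two property. -/
theorem stmt_8 {K : Type*} [TopologicalSpace K] [CompactSpace K] [T2Space K]
    {X : Type*} [NormedAddCommGroup X] [NormedSpace ℂ X] [CompleteSpace X] [Nontrivial X]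
    (S : Submodule ℂ (lp (fun _ : K => X) ∞))
    (hSweak : ∀ f ∈ S, Continuous (fun t : K => toWeakSpace ℂ X (f t)))
    (hSclosed : IsClosed (S : Set (lp (fun _ : K => X) ∞)))
    (A : Subalgebra ℂ C(K, ℂ))
    (hAbase : (A : Set C(K, ℂ)) =
      {g : C(K, ℂ) | ∃ f ∈ S, ∃ φ : X →L[ℂ] ℂ, ∀ t : K, g t = φ (f t)})
    (hAclosed : IsClosed (A : Set C(K, ℂ)))
    (hAsep : ∀ s t : K, s ≠ t → ∃ f ∈ A, f s ≠ f t)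
    (hmul : ∀ φ ∈ A, ∀ f ∈ S, ∃ h ∈ S, ∀ t : K, h t = φ t • f t)
    (hAinf : ¬ FiniteDimensional ℂ A) :
    ∀ W : Set (WeakSpace ℂ S), IsOpen W →
      ((⇑(toWeakSpace ℂ S) ⁻¹' W) ∩ Metric.closedBall (0 : S) 1).Nonempty →
      Metric.diam ((⇑(toWeakSpace ℂ S) ⁻¹' W) ∩ Metric.closedBall (0 : S) 1) = 2 :=
  stmt_8_general S hSweak A hAbase hmul hAinf
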